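/- Let f be an M-map with f(∅) ≠ 0, let a ⊆ Ω and let i ∈ Ω with i ∉ a. Then log* f(a ∪ {i}) = Σ_{b ⊆ a} f(b ∪ {i}) · f^{-1*}(a \ b), where f^{-1*} is the convolution inverse of f given by f^{-1*}(∅) = 1/f(∅) and f^{-1*}(c) = Σ_{p} |p|!·(−1)^{|p|}·(∏_{d ∈ p} f(d)) / f(∅)^{|p|+1} for nonempty c (sum over set partitions p of c). -/

import Mathlib

open Finset

/-- The convolution product of M-maps: `(f * g)(a) = ∑_{b ⊆ a} f(b) · g(a \ b)`. -/
noncomputable def MMap.conv {Ω : Type*} [DecidableEq Ω] (f g : Finset Ω → ℂ) : Finset Ω → ℂ :=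
  fun a => ∑ b ∈ a.powerset, f b * g (a \ b)

/-- The cumulant `log* f` on nonempty subsets:
`log* f(a) = ∑_p (|p|−1)!·(−1)^{|p|−1}·(∏_{c ∈ p} f(c))/f(∅)^{|p|}`,
summed over all set partitions `p` of `a`, `|p|` being the number of blocks. -/
noncomputable def MMap.logStar {Ω : Type*} [DecidableEq Ω] (f : Finset Ω → ℂ) :
    Finset Ω → ℂ := fun a =>
  ∑ p : Finpartition a,
    (Nat.factorial (p.parts.card - 1) : ℂ) * (-1 : ℂ) ^ (p.parts.card - 1) *
      (∏ c ∈ p.parts, f c) / (f ∅) ^ p.parts.card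

/-- The explicit convolution inverse `f^{-1*}`: `f^{-1*}(∅) = 1/f(∅)` and, for
nonempty `c`, `f^{-1*}(c) = ∑_p |p|!·(−1)^{|p|}·(∏_{d ∈ p} f(d))/f(∅)^{|p|+1}`,
summed over all set partitions `p` of `c`. -/
noncomputable def MMap.invStar {Ω : Type*} [DecidableEq Ω] (f : Finset Ω → ℂ) :
    Finset Ω → ℂ := fun c =>
  if c = ∅ then 1 / f ∅ else
    ∑ p : Finpartition c,
      (Nat.factorial p.parts.card : ℂ) * (-1 : ℂ) ^ p.parts.card * (∏ d ∈ p.parts, f d) /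
        (f ∅) ^ (p.parts.card + 1)

/-!
Sort the set partitions of `a ∪ {i}` by the block `b ∪ {i}` containing `i`. What remains is an
arbitrary set partition `q` of `a \ b`, and as the whole partition has `|q| + 1` blocks, its
cumulant weight is `f (b ∪ {i})` times the weight of `q` in `f^{-1*}`.
-/

section Lattice

variable {α : Type*} [Lattice α] [OrderBot α] {a b : α}

theorem notMem_parts_of_disjoint (P : Finpartition a) (hb : b ≠ ⊥) (hab : Disjoint a b) :
    b ∉ P.parts :=
  fun hmem => hb (hab.symm.eq_bot_of_le (P.le hmem))

end Lattice

section GeneralizedBooleanAlgebra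

variable {α : Type*} [GeneralizedBooleanAlgebra α] [DecidableEq α] {a b : α}

theorem parts_avoid_of_mem (P : Finpartition a) (hb : b ∈ P.parts) :
    (P.avoid b).parts = P.parts.erase b := by
  have sdiff_eq_self {d : α} (hd : d ∈ P.parts) (hdb : d ≠ b) : d \ b = d :=
    (P.disjoint hd hb hdb).sdiff_eq_left
  have not_le_block {d : α} (hd : d ∈ P.parts) (hdb : d ≠ b) : ¬d ≤ b :=
    fun hle => P.ne_bot hd ((P.disjoint hd hb hdb).eq_bot_of_le hle)
  ext c
  rw [Finpartition.mem_avoid, mem_erase]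
  constructor
  · rintro ⟨d, hd, hdb, rfl⟩
    have hne : d ≠ b := fun h => hdb h.le
    rw [sdiff_eq_self hd hne]
    exact ⟨hne, hd⟩
  · rintro ⟨hcb, hc⟩
    exact ⟨c, hc, not_le_block hc hcb, sdiff_eq_self hc hcb⟩

theorem sum_finpartition_mem_parts {M : Type*} [AddCommMonoid M] [Fintype (Finpartition a)]
    [Fintype (Finpartition (a \ b))] (hb : b ≠ ⊥) (hba : b ≤ a) (F : Finset α → M) :
    ∑ P : Finpartition a with b ∈ P.parts, F P.parts =
      ∑ Q : Finpartition (a \ b), F (insert b Q.parts) := by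
  refine sum_nbij' (fun P => P.avoid b)
    (fun Q => Q.extend hb disjoint_sdiff_self_left (sdiff_sup_cancel hba)) ?_ ?_ ?_ ?_ ?_
  · exact fun P _ => mem_univ _
  · exact fun Q _ => mem_filter.2 ⟨mem_univ _, mem_insert_self b Q.parts⟩
  · intro P hP
    have hbP : b ∈ P.parts := (mem_filter.1 hP).2
    ext1
    rw [Finpartition.extend_parts, parts_avoid_of_mem P hbP, insert_erase hbP]
  · intro Q _
    ext1
    rw [parts_avoid_of_mem _ (mem_insert_self b Q.parts), Finpartition.extend_parts,
      erase_insert (notMem_parts_of_disjoint Q hb disjoint_sdiff_self_left)]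
  · intro P hP
    have hbP : b ∈ P.parts := (mem_filter.1 hP).2
    rw [parts_avoid_of_mem P hbP, insert_erase hbP]

end GeneralizedBooleanAlgebra

section Finset

variable {Ω M : Type*} [DecidableEq Ω] [AddCommMonoid M]

theorem sum_finpartition_eq_sum_part {s : Finset Ω} {i : Ω} (hi : i ∈ s)
    (F : Finset (Finset Ω) → M) :
    ∑ P : Finpartition s, F P.parts =
      ∑ c ∈ s.powerset with i ∈ c, ∑ Q : Finpartition (s \ c), F (insert c Q.parts) := by
  have part_mem_filter (P : Finpartition s) : P.part i ∈ s.powerset.filter (i ∈ ·) :=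
    mem_filter.2 ⟨mem_powerset.2 (P.part_subset i), P.mem_part hi⟩
  rw [← sum_fiberwise_of_maps_to fun P _ => part_mem_filter P]
  refine sum_congr rfl fun c hc => ?_
  obtain ⟨hcs, hic⟩ := mem_filter.1 hc
  have part_eq_iff (P : Finpartition s) : P.part i = c ↔ c ∈ P.parts :=
    ⟨fun h => h ▸ P.part_mem.2 hi, fun h => P.part_eq_of_mem h hic⟩
  simp only [part_eq_iff]
  exact sum_finpartition_mem_parts (ne_empty_of_mem hic) (mem_powerset.1 hcs) F

theorem sum_powerset_insert_filter_mem {a : Finset Ω} {i : Ω} (hi : i ∉ a) (g : Finset Ω → M) :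
    ∑ c ∈ (insert i a).powerset with i ∈ c, g c = ∑ b ∈ a.powerset, g (insert i b) := by
  have notMem_of_mem {b : Finset Ω} (hb : b ∈ a.powerset) : i ∉ b :=
    notMem_mono (mem_powerset.1 hb) hi
  rw [sum_filter, sum_powerset_insert hi,
    sum_eq_zero fun b hb => if_neg (notMem_of_mem hb), zero_add]
  exact sum_congr rfl fun b _ => if_pos (mem_insert_self i b)

theorem sum_finpartition_insert {a : Finset Ω} {i : Ω} (hi : i ∉ a) (F : Finset (Finset Ω) → M) :
    ∑ P : Finpartition (insert i a), F P.parts =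
      ∑ b ∈ a.powerset, ∑ Q : Finpartition (a \ b), F (insert (insert i b) Q.parts) := by
  rw [sum_finpartition_eq_sum_part (mem_insert_self i a), sum_powerset_insert_filter_mem hi]
  refine sum_congr rfl fun b _ => ?_
  rw [insert_sdiff_insert, sdiff_insert_of_notMem hi]

end Finset

namespace MMap

variable {Ω : Type*} [DecidableEq Ω]

theorem invStar_eq_sum_finpartition (f : Finset Ω → ℂ) (c : Finset Ω) :
    invStar f c = ∑ p : Finpartition c,
      (Nat.factorial p.parts.card : ℂ) * (-1 : ℂ) ^ p.parts.card * (∏ d ∈ p.parts, f d) /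
        (f ∅) ^ (p.parts.card + 1) := by
  rcases eq_or_ne c ∅ with rfl | hc
  · have parts_eq (p : Finpartition (∅ : Finset Ω)) : p.parts = ∅ :=
      Finpartition.parts_eq_empty_iff.2 rfl
    have : Unique (Finpartition (∅ : Finset Ω)) :=
      inferInstanceAs (Unique (Finpartition (⊥ : Finset Ω)))
    simp [invStar, parts_eq]
  · exact if_neg hc

theorem logStar_weight_insert (f : Finset Ω → ℂ) {S : Finset (Finset Ω)} {c : Finset Ω}
    (hc : c ∉ S) :
    (Nat.factorial ((insert c S).card - 1) : ℂ) * (-1 : ℂ) ^ ((insert c S).card - 1) *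
        (∏ d ∈ insert c S, f d) / (f ∅) ^ (insert c S).card =
      f c * ((Nat.factorial S.card : ℂ) * (-1 : ℂ) ^ S.card * (∏ d ∈ S, f d) /
        (f ∅) ^ (S.card + 1)) := by
  rw [card_insert_of_notMem hc, prod_insert hc, Nat.add_sub_cancel]
  ring

end MMap

theorem logStar_insert_general {Ω : Type*} [DecidableEq Ω]
    (f : Finset Ω → ℂ) (_hf : f ∅ ≠ 0) (a : Finset Ω) (i : Ω) (hi : i ∉ a) :
    MMap.logStar f (insert i a) =
      ∑ b ∈ a.powerset, f (insert i b) * MMap.invStar f (a \ b) := by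
  rw [MMap.logStar, sum_finpartition_insert hi fun S =>
    (Nat.factorial (S.card - 1) : ℂ) * (-1 : ℂ) ^ (S.card - 1) * (∏ c ∈ S, f c) /
      (f ∅) ^ S.card]
  refine sum_congr rfl fun b _ => ?_
  rw [MMap.invStar_eq_sum_finpartition, mul_sum]
  refine sum_congr rfl fun q _ => MMap.logStar_weight_insert f ?_
  have hdisj : Disjoint (a \ b) (insert i b) :=
    disjoint_insert_right.2 ⟨fun h => hi (mem_sdiff.1 h).1, sdiff_disjoint⟩
  exact notMem_parts_of_disjoint q (insert_ne_empty i b) hdisj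

/-- The "raising"/formal-derivative property of the cumulant: for `i ∉ a`,
`log* f(a ∪ {i}) = ∑_{b ⊆ a} f(b ∪ {i}) · f^{-1*}(a \ b)`. -/
theorem logStar_insert {Ω : Type*} [DecidableEq Ω] [Fintype Ω]
    (f : Finset Ω → ℂ) (hf : f ∅ ≠ 0) (a : Finset Ω) (i : Ω) (hi : i ∉ a) :
    MMap.logStar f (insert i a) =
      ∑ b ∈ a.powerset, f (insert i b) * MMap.invStar f (a \ b) :=
  logStar_insert_general f hf a i hi
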